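/- arXiv:2403.07264 — 3 statements merged into one kernel-verified Lean document; each statement's English description precedes it below -/
import Mathlib

section
/- Let p ≥ n be positive integers, X a real p×n matrix, α > 0, and r > 0. Set Σ̂ := (1/n)·X·Xᵀ, Ǧ := (1/n)·Xᵀ·X, and ρ := r·n^{−α}. Then trace((Σ̂ + ρ·I_p)⁻²·Σ̂) = n^{α+1} · (d/dr)[ r · S_{esd(n^α·Ǧ)}(−r) ], i.e., the map r ↦ r·S_{esd(n^α·Ǧ)}(−r) is differentiable at r and n^{α+1} times its derivative equals the trace on the left-hand side. -/
open Matrix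

/-- The Stieltjes transform of the empirical spectral measure of a symmetric `m×m` real
matrix `M` at `z`: `S_{esd(M)}(z) = (1/m)·Σᵢ 1/(λᵢ − z)`. -/
noncomputable def stieltjesESD {m : ℕ} {M : Matrix (Fin m) (Fin m) ℝ}
    (hM : M.IsHermitian) (z : ℝ) : ℝ :=
  (1 / (m : ℝ)) * ∑ i, 1 / (hM.eigenvalues i - z)

theorem aux_spec {n : ℕ} {H : Matrix (Fin n) (Fin n) ℝ} (hG : H.IsHermitian) (r : ℝ)
    (hne : ∀ i, hG.eigenvalues i + r ≠ 0) :
    ∃ W : Matrix (Fin n) (Fin n) ℝ, (H + r • (1 : Matrix (Fin n) (Fin n) ℝ)) * W = 1 ∧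
      Matrix.trace (W * W * H) = ∑ i, hG.eigenvalues i / (hG.eigenvalues i + r) ^ 2 := by
  set U : Matrix (Fin n) (Fin n) ℝ := (hG.eigenvectorUnitary : Matrix (Fin n) (Fin n) ℝ) with hU
  have h1 : U * star U = 1 := Unitary.coe_mul_star_self _
  have h2 : star U * U = 1 := Unitary.coe_star_mul_self _
  set D : Matrix (Fin n) (Fin n) ℝ := diagonal hG.eigenvalues with hD
  have hs : H = U * D * star U := by
    have := hG.spectral_theorem
    simpa [Unitary.conjStarAlgAut_apply, Function.comp_def] using this
  set V : Matrix (Fin n) (Fin n) ℝ := diagonal (fun i => (hG.eigenvalues i + r)⁻¹) with hV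
  have hDV : (D + r • (1 : Matrix (Fin n) (Fin n) ℝ)) * V = 1 := by
    rw [hD, hV, Matrix.smul_one_eq_diagonal, Matrix.diagonal_add, Matrix.diagonal_mul_diagonal,
      ← Matrix.diagonal_one]
    congr 1
    funext i
    exact mul_inv_cancel₀ (hne i)
  clear_value U
  have hr : H + r • (1 : Matrix (Fin n) (Fin n) ℝ)
      = U * (D + r • (1 : Matrix (Fin n) (Fin n) ℝ)) * star U := by
    rw [Matrix.mul_add, Matrix.add_mul, ← hs, Matrix.mul_smul, Matrix.smul_mul, Matrix.mul_one, h1]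
  refine ⟨U * V * star U, ?_, ?_⟩
  · rw [hr]
    calc _ = U * (D + r • (1 : Matrix (Fin n) (Fin n) ℝ)) * (star U * U) * V * star U := by
          simp only [Matrix.mul_assoc]
      _ = U * ((D + r • (1 : Matrix (Fin n) (Fin n) ℝ)) * V) * star U := by
          rw [h2, Matrix.mul_one]; simp only [Matrix.mul_assoc]
      _ = 1 := by rw [hDV, Matrix.mul_one, h1]
  · have : U * V * star U * (U * V * star U) * H = U * (V * V * D) * star U := by
      calc _ = U * V * star U * (U * V * star U) * (U * D * star U) := by rw [← hs]
        _ = U * V * (star U * U) * V * (star U * U) * D * star U := by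
          simp only [Matrix.mul_assoc]
        _ = _ := by rw [h2, Matrix.mul_one, Matrix.mul_one]; simp only [Matrix.mul_assoc]
    rw [this, Matrix.trace_mul_comm, ← Matrix.mul_assoc, h2, Matrix.one_mul, hV, hD,
      Matrix.diagonal_mul_diagonal, Matrix.diagonal_mul_diagonal, Matrix.trace_diagonal]
    refine Finset.sum_congr rfl fun i _ => ?_
    have := hne i
    field_simp

/-- With `Σ̂ := (1/n)·X·Xᵀ`, `Ǧ := (1/n)·Xᵀ·X`, `ρ := r·n^{−α}`, `p ≥ n`,
`α > 0`, `r > 0`: the map `r ↦ r·S_{esd(n^α·Ǧ)}(−r)` is differentiable at `r` and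
`n^{α+1}` times its derivative equals `trace((Σ̂ + ρ·I_p)⁻²·Σ̂)`. -/
theorem trace_eq_deriv_stieltjes (p n : ℕ) (hn : 0 < n) (hpn : n ≤ p)
    (X : Matrix (Fin p) (Fin n) ℝ) (α r : ℝ) (hα : 0 < α) (hr : 0 < r)
    (hG : (((n : ℝ) ^ α) • ((1 / (n : ℝ)) • (Xᵀ * X))).IsHermitian) :
    ∃ d : ℝ,
      HasDerivAt (fun s : ℝ => s * stieltjesESD hG (-s)) d r ∧
      Matrix.trace
          ((((1 / (n : ℝ)) • (X * Xᵀ)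
                + (r * (n : ℝ) ^ (-α)) • (1 : Matrix (Fin p) (Fin p) ℝ))⁻¹
              * (((1 / (n : ℝ)) • (X * Xᵀ)
                + (r * (n : ℝ) ^ (-α)) • (1 : Matrix (Fin p) (Fin p) ℝ))⁻¹))
            * ((1 / (n : ℝ)) • (X * Xᵀ)))
        = (n : ℝ) ^ (α + 1) * d := by
  have hn' : (0 : ℝ) < n := by exact_mod_cast hn
  have hc : (0 : ℝ) < (n : ℝ) ^ α := Real.rpow_pos_of_pos hn' _
  have hps : (((n : ℝ) ^ α) • ((1 / (n : ℝ)) • (Xᵀ * X))).PosSemidef := by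
    have h := Matrix.posSemidef_conjTranspose_mul_self X
    rw [Matrix.conjTranspose_eq_transpose_of_trivial] at h
    exact (h.smul (by positivity)).smul hc.le
  have hlam : ∀ i, 0 ≤ hG.eigenvalues i := fun i => hps.eigenvalues_nonneg i
  have hpos : ∀ i, hG.eigenvalues i + r ≠ 0 := fun i => by have := hlam i; positivity
  obtain ⟨W, hW, htr⟩ := aux_spec hG r hpos
  refine ⟨(1 / (n : ℝ)) * ∑ i, hG.eigenvalues i / (hG.eigenvalues i + r) ^ 2, ?_, ?_⟩
  · have hfun : (fun s : ℝ => s * stieltjesESD hG (-s))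
        = fun s : ℝ => (1 / (n : ℝ)) * ∑ i, s / (hG.eigenvalues i + s) := by
      funext s
      rw [stieltjesESD, mul_left_comm, Finset.mul_sum]
      congr 1
      refine Finset.sum_congr rfl fun i _ => ?_
      rw [sub_neg_eq_add, mul_one_div]
    rw [hfun]
    refine HasDerivAt.const_mul _ (HasDerivAt.fun_sum fun i _ => ?_)
    have := (hasDerivAt_id r).fun_div ((hasDerivAt_id r).const_add (hG.eigenvalues i)) (hpos i)
    refine this.congr_deriv ?_
    simp only [id]
    ring
  · have hA : IsUnit ((1 / (n : ℝ)) • (X * Xᵀ)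
                + (r * (n : ℝ) ^ (-α)) • (1 : Matrix (Fin p) (Fin p) ℝ)).det := by
      have h := Matrix.posSemidef_self_mul_conjTranspose X
      rw [Matrix.conjTranspose_eq_transpose_of_trivial] at h
      have h1 : ((1 / (n : ℝ)) • (X * Xᵀ)).PosSemidef := h.smul (by positivity)
      have h2 : ((r * (n : ℝ) ^ (-α)) • (1 : Matrix (Fin p) (Fin p) ℝ)).PosDef :=
        Matrix.PosDef.one.smul (mul_pos hr (Real.rpow_pos_of_pos hn' _))
      exact (Matrix.PosDef.posSemidef_add h1 h2).det_pos.ne'.isUnit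
    rw [Real.rpow_add hn', Real.rpow_one]
    rw [Real.rpow_neg hn'.le] at hA ⊢
    generalize (n : ℝ) ^ α = c at *
    set A := (1 / (n : ℝ)) • (X * Xᵀ) + (r * c⁻¹) • (1 : Matrix (Fin p) (Fin p) ℝ) with hAdef
    have hAX : A * (c • X) = X * (c • ((1 / (n : ℝ)) • (Xᵀ * X)) + r • (1 : Matrix (Fin n) (Fin n) ℝ)) := by
      rw [hAdef, Matrix.add_mul, Matrix.mul_add]
      simp only [Matrix.smul_mul, Matrix.mul_smul, Matrix.mul_one, Matrix.one_mul, Matrix.mul_assoc,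
        smul_smul]
      congr 2
      · field_simp
    have hinv : A⁻¹ * X = c • (X * W) := by
      have h3 : A * (c • (X * W)) = X := by
        rw [← Matrix.smul_mul, ← Matrix.mul_assoc, hAX, Matrix.mul_assoc, hW, Matrix.mul_one]
      calc A⁻¹ * X = A⁻¹ * (A * (c • (X * W))) := by rw [h3]
        _ = _ := Matrix.nonsing_inv_mul_cancel_left _ _ hA
    have h4 : A⁻¹ * A⁻¹ * ((1 / (n : ℝ)) • (X * Xᵀ))
        = c • (X * (W * W * (c • (1 / (n : ℝ)) • Xᵀ))) := by
      calc _ = (1 / (n : ℝ)) • (A⁻¹ * (A⁻¹ * X) * Xᵀ) := by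
            simp only [Matrix.mul_smul, Matrix.mul_assoc]
        _ = (1 / (n : ℝ)) • (c • ((A⁻¹ * X) * W) * Xᵀ) := by
            rw [hinv, Matrix.mul_smul, ← Matrix.mul_assoc, hinv]
        _ = _ := by
            rw [hinv]
            simp only [Matrix.mul_smul, Matrix.smul_mul, Matrix.mul_assoc, smul_smul]
            congr 1; ring
    rw [h4, Matrix.trace_smul, Matrix.trace_mul_comm]
    have h5 : W * W * (c • (1 / (n : ℝ)) • Xᵀ) * X = W * W * (c • ((1 / (n : ℝ)) • (Xᵀ * X))) := by
      simp only [Matrix.mul_smul, Matrix.smul_mul, Matrix.mul_assoc]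
    rw [h5, htr, smul_eq_mul]
    field_simp
end

section
/- Let α > 1 and γ > 0, and define I(k) := ∫₀^{1/γ} dx/(1 + k·x^α) and R(k) := k·(1 − I(k)) for k ≥ 0. Then there exists k_crit ≥ 0 with R(k_crit) = 0 such that R is strictly increasing and strictly positive on (k_crit, +∞), R(k) → +∞ as k → +∞, and consequently for every r > 0 there exists a unique k ∈ (k_crit, +∞) with R(k) = r. Here k_crit can be taken to be the largest real number k ≥ 0 with R(k) = 0. -/
open Filter

lemma aux_cont (α k : ℝ) (hα : 1 < α) (hk : 0 ≤ k) (b : ℝ) :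
    ContinuousOn (fun x : ℝ => 1 / (1 + k * x ^ α)) (Set.Icc 0 b) := by
  have h : Continuous (fun x : ℝ => x ^ α) := Real.continuous_rpow_const (by linarith)
  apply ContinuousOn.div continuousOn_const (by fun_prop)
  intro x hx
  have := Real.rpow_nonneg hx.1 α
  positivity

lemma aux_anti (α : ℝ) (hα : 1 < α) (b : ℝ) (hb : 0 < b) (k l : ℝ) (hk : 0 ≤ k) (hl : k < l) :
    ∫ x in (0 : ℝ)..b, 1 / (1 + l * x ^ α) < ∫ x in (0 : ℝ)..b, 1 / (1 + k * x ^ α) := by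
  apply intervalIntegral.integral_lt_integral_of_continuousOn_of_le_of_exists_lt hb
    (aux_cont α l hα (by linarith) b) (aux_cont α k hα hk b)
  · intro x hx
    have := Real.rpow_nonneg hx.1.le α
    gcongr
  · refine ⟨b, ⟨hb.le, le_rfl⟩, ?_⟩
    have := Real.rpow_pos_of_pos hb α
    gcongr

lemma aux_meas (α k b : ℝ) : MeasureTheory.AEStronglyMeasurable (fun x : ℝ => 1 / (1 + k * x ^ α))
    (MeasureTheory.volume.restrict (Set.uIoc 0 b)) := by
  apply Measurable.aestronglyMeasurable
  fun_prop

lemma aux_bound (α k x b : ℝ) (hb : 0 < b) (hk : 0 ≤ k) (hx : x ∈ Set.uIoc 0 b) :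
    ‖1 / (1 + k * x ^ α)‖ ≤ 1 := by
  rw [Set.uIoc_of_le hb.le] at hx
  have := Real.rpow_nonneg hx.1.le α
  rw [Real.norm_of_nonneg (by positivity), div_le_one (by positivity)]
  have : 0 ≤ k * x ^ α := by positivity
  linarith

lemma aux_contI (α : ℝ) (b : ℝ) (hb : 0 < b) :
    ContinuousOn (fun k : ℝ => ∫ x in (0 : ℝ)..b, 1 / (1 + k * x ^ α)) (Set.Ici 0) := by
  intro k hk
  apply intervalIntegral.continuousWithinAt_of_dominated_interval (bound := fun _ => 1)
  · exact Eventually.of_forall fun k => aux_meas α k b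
  · filter_upwards [self_mem_nhdsWithin] with k hk
    exact Eventually.of_forall fun x hx => aux_bound α k x b hb hk hx
  · exact intervalIntegrable_const
  · refine Eventually.of_forall fun x hx => ?_
    rw [Set.uIoc_of_le hb.le] at hx
    have := Real.rpow_nonneg hx.1.le α
    have hk' : 0 ≤ k := hk
    apply ContinuousAt.continuousWithinAt
    apply ContinuousAt.div continuousAt_const (by fun_prop)
    positivity

lemma aux_lim (α : ℝ) (b : ℝ) (hb : 0 < b) :
    Tendsto (fun k : ℝ => ∫ x in (0 : ℝ)..b, 1 / (1 + k * x ^ α)) atTop (nhds 0) := by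
  have : Tendsto (fun k : ℝ => ∫ x in (0 : ℝ)..b, 1 / (1 + k * x ^ α)) atTop
      (nhds (∫ x in (0 : ℝ)..b, (0 : ℝ))) := by
    apply intervalIntegral.tendsto_integral_filter_of_dominated_convergence (fun _ => 1)
    · exact Eventually.of_forall fun k => aux_meas α k b
    · filter_upwards [eventually_ge_atTop 0] with k hk
      exact Eventually.of_forall fun x hx => aux_bound α k x b hb hk hx
    · exact intervalIntegrable_const
    · refine Eventually.of_forall fun x hx => ?_
      rw [Set.uIoc_of_le hb.le] at hx
      have := Real.rpow_pos_of_pos hx.1 α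
      apply Tendsto.div_atTop tendsto_const_nhds
      exact tendsto_atTop_add_const_left _ _ (tendsto_id.atTop_mul_const this)
  simpa using this

/-- For `α > 1`, `γ > 0`, with `I(k) := ∫₀^{1/γ} dx/(1 + k·x^α)` and
`R(k) := k·(1 − I(k))` for `k ≥ 0`: there exists `k_crit ≥ 0` with `R(k_crit) = 0`
(which can be taken to be the largest `k ≥ 0` with `R(k) = 0`) such that `R` is strictly
increasing and strictly positive on `(k_crit, +∞)`, `R(k) → +∞` as `k → +∞`, and for
every `r > 0` there is a unique `k ∈ (k_crit, +∞)` with `R(k) = r`. -/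
theorem exists_kcrit (α γ : ℝ) (hα : 1 < α) (hγ : 0 < γ) :
    ∃ kcrit : ℝ, 0 ≤ kcrit ∧
      kcrit * (1 - ∫ x in (0 : ℝ)..(1 / γ), 1 / (1 + kcrit * x ^ α)) = 0 ∧
      IsGreatest
        {k : ℝ | 0 ≤ k ∧ k * (1 - ∫ x in (0 : ℝ)..(1 / γ), 1 / (1 + k * x ^ α)) = 0}
        kcrit ∧
      StrictMonoOn
        (fun k : ℝ => k * (1 - ∫ x in (0 : ℝ)..(1 / γ), 1 / (1 + k * x ^ α)))
        (Set.Ioi kcrit) ∧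
      (∀ k : ℝ, kcrit < k →
        0 < k * (1 - ∫ x in (0 : ℝ)..(1 / γ), 1 / (1 + k * x ^ α))) ∧
      Tendsto (fun k : ℝ => k * (1 - ∫ x in (0 : ℝ)..(1 / γ), 1 / (1 + k * x ^ α)))
        atTop atTop ∧
      (∀ r : ℝ, 0 < r →
        ∃! k : ℝ, k ∈ Set.Ioi kcrit ∧
          k * (1 - ∫ x in (0 : ℝ)..(1 / γ), 1 / (1 + k * x ^ α)) = r) := by
  have hb : 0 < 1 / γ := by positivity
  have hanti := aux_anti α hα (1 / γ) hb
  have hcont := aux_contI α (1 / γ) hb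
  have hlim := aux_lim α (1 / γ) hb
  generalize hI : (fun k : ℝ => ∫ x in (0 : ℝ)..(1 / γ), 1 / (1 + k * x ^ α)) = I at hcont hlim
  have hI' : ∀ k : ℝ, ∫ x in (0 : ℝ)..(1 / γ), 1 / (1 + k * x ^ α) = I k := fun k => by rw [← hI]
  simp only [hI'] at hanti ⊢
  have hc : ∃ c : ℝ, 0 ≤ c ∧ c * (1 - I c) = 0 ∧ I c ≤ 1 := by
    by_cases h0 : I 0 ≤ 1
    · exact ⟨0, le_rfl, by simp, h0⟩
    · push Not at h0
      obtain ⟨K, hK, hK0⟩ :=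
        ((hlim.eventually_lt_const (zero_lt_one)).and (eventually_ge_atTop 0)).exists
      obtain ⟨c, hc, hc1⟩ := intermediate_value_Icc' hK0
        (hcont.mono Set.Icc_subset_Ici_self) ⟨hK.le, h0.le⟩
      exact ⟨c, hc.1, by rw [hc1]; simp, hc1.le⟩
  obtain ⟨c, hc0, hRc, hIc⟩ := hc
  have hlt : ∀ k, c < k → I k < 1 := fun k hk => (hanti c k hc0 hk).trans_le hIc
  have hpos : ∀ k, c < k → 0 < k * (1 - I k) := fun k hk =>
    mul_pos (by linarith) (by linarith [hlt k hk])
  have hmono : StrictMonoOn (fun k : ℝ => k * (1 - I k)) (Set.Ioi c) := by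
    intro k hk l hl hkl
    have hk' : c < k := hk
    have h1 := hlt k hk
    have h2 := hanti k l (by linarith) hkl
    exact mul_lt_mul'' hkl (by linarith) (by linarith) (by linarith)
  have htop : Tendsto (fun k : ℝ => k * (1 - I k)) atTop atTop := by
    have : Tendsto (fun k : ℝ => 1 - I k) atTop (nhds (1 - 0)) := hlim.const_sub 1
    exact tendsto_id.atTop_mul_pos (by norm_num) this
  refine ⟨c, hc0, hRc, ⟨⟨hc0, hRc⟩, ?_⟩, hmono, hpos, htop, ?_⟩
  · rintro k ⟨_, hk⟩
    by_contra h
    exact (hpos k (not_le.mp h)).ne' hk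
  · intro r hr
    obtain ⟨K, hK, hKc⟩ := ((htop.eventually_ge_atTop r).and (eventually_ge_atTop c)).exists
    have hcR : ContinuousOn (fun k : ℝ => k * (1 - I k)) (Set.Icc c K) :=
      continuousOn_id.mul (continuousOn_const.sub
        (hcont.mono fun x hx => hc0.trans hx.1))
    obtain ⟨k, hk, hkr⟩ := intermediate_value_Icc hKc hcR ⟨by simpa [hRc] using hr.le, hK⟩
    have hkr' : k * (1 - I k) = r := hkr
    have hck : c < k := by
      refine lt_of_le_of_ne hk.1 ?_
      rintro rfl
      linarith
    refine ⟨k, ⟨hck, hkr'⟩, ?_⟩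
    rintro l ⟨hl, hlr⟩
    exact hmono.injOn hl hck (by simp only [hlr, hkr'])
end

section
/- Let p, n be positive integers, X a real p×n matrix, y ∈ ℝ^n, and ρ > 0. Let β̂_ρ := ((1/n)·X·Xᵀ + ρ·I_p)⁻¹·(1/n)·X·y be the ridge regressor, and let τ̂ := (1/n)·‖Xᵀβ̂_ρ − y‖₂² be its training error. Then β̂_ρ is the minimum-norm τ̂-near-interpolator: for every β ∈ ℝ^p with (1/n)·‖Xᵀβ − y‖₂² ≤ τ̂, one has ‖β‖₂ ≥ ‖β̂_ρ‖₂. -/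
open Matrix

/-- The ridge regressor `β̂_ρ` is the minimum-norm `τ̂`-near-interpolator where
`τ̂` is its own training error: any `β` whose training error is at most `τ̂` satisfies
`‖β‖₂ ≥ ‖β̂_ρ‖₂` (equivalently, for squared norms). -/
theorem ridge_is_min_norm_near_interpolator (p n : ℕ) (hp : 0 < p) (hn : 0 < n)
    (X : Matrix (Fin p) (Fin n) ℝ) (y : Fin n → ℝ) (ρ : ℝ) (hρ : 0 < ρ) :
    ∀ β : Fin p → ℝ,
      (1 / (n : ℝ)) * (∑ i, (Xᵀ *ᵥ β - y) i ^ 2)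
        ≤ (1 / (n : ℝ)) *
            (∑ i, (Xᵀ *ᵥ (((1 / (n : ℝ)) • (X * Xᵀ) + ρ • (1 : Matrix (Fin p) (Fin p) ℝ))⁻¹
                    *ᵥ ((1 / (n : ℝ)) • (X *ᵥ y))) - y) i ^ 2) →
      Real.sqrt (∑ j, ((((1 / (n : ℝ)) • (X * Xᵀ) + ρ • (1 : Matrix (Fin p) (Fin p) ℝ))⁻¹
                    *ᵥ ((1 / (n : ℝ)) • (X *ᵥ y))) j) ^ 2)
        ≤ Real.sqrt (∑ j, (β j) ^ 2) := by
  intro β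
  set c : ℝ := 1 / (n : ℝ) with hc
  have hcpos : 0 < c := by positivity
  set A := c • (X * Xᵀ) + ρ • (1 : Matrix (Fin p) (Fin p) ℝ) with hA
  have hAp : A.PosDef := by
    have h1 : (X * Xᵀ).PosSemidef := by
      have := Matrix.posSemidef_self_mul_conjTranspose X
      rwa [Matrix.conjTranspose_eq_transpose_of_trivial] at this
    exact Matrix.PosDef.posSemidef_add (h1.smul hcpos.le) (Matrix.PosDef.one.smul hρ)
  have hu : IsUnit A.det := (Matrix.isUnit_iff_isUnit_det A).1 hAp.isUnit
  set b := A⁻¹ *ᵥ (c • (X *ᵥ y)) with hb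
  have hAb : A *ᵥ b = c • (X *ᵥ y) := by
    rw [hb, Matrix.mulVec_mulVec, Matrix.mul_nonsing_inv A hu, Matrix.one_mulVec]
  clear_value b
  intro h
  apply Real.sqrt_le_sqrt
  obtain ⟨d, rfl⟩ : ∃ d, β = b + d := ⟨β - b, by simp⟩
  have hn1 : c • (X *ᵥ (Xᵀ *ᵥ b - y)) = - (ρ • b) := by
    rw [hA, Matrix.add_mulVec, Matrix.smul_mulVec, Matrix.smul_mulVec, Matrix.one_mulVec,
      ← Matrix.mulVec_mulVec] at hAb
    rw [Matrix.mulVec_sub, smul_sub, ← hAb]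
    abel
  have hs : ∀ {m : ℕ} (v : Fin m → ℝ), ∑ i, v i ^ 2 = v ⬝ᵥ v := by
    intro m v
    simp [dotProduct, sq]
  have key : c * ((Xᵀ *ᵥ d) ⬝ᵥ (Xᵀ *ᵥ b - y)) = - (ρ * (d ⬝ᵥ b)) := by
    have := congrArg (fun v => d ⬝ᵥ v) hn1
    simp only [dotProduct_smul, dotProduct_neg, smul_eq_mul] at this
    rw [← this, Matrix.dotProduct_mulVec, Matrix.mulVec_transpose]
  have e : Xᵀ *ᵥ (b + d) - y = (Xᵀ *ᵥ b - y) + Xᵀ *ᵥ d := by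
    rw [Matrix.mulVec_add]
    abel
  have p1 : 0 ≤ (Xᵀ *ᵥ d) ⬝ᵥ (Xᵀ *ᵥ d) := by
    rw [← hs]
    positivity
  have p2 : 0 ≤ d ⬝ᵥ d := by
    rw [← hs]
    positivity
  rw [e, hs, hs] at h
  rw [hs, hs]
  generalize Xᵀ *ᵥ b - y = r at *
  generalize Xᵀ *ᵥ d = w at *
  simp only [dotProduct_add, add_dotProduct] at h ⊢
  rw [dotProduct_comm r w] at h
  rw [dotProduct_comm b d]
  have p3 := mul_nonneg hcpos.le p1
  have : 0 ≤ ρ * (d ⬝ᵥ b) := by nlinarith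
  have := nonneg_of_mul_nonneg_right this hρ
  linarith
end
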